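/- For all integers w, p0, p1, p2 and all nonnegative integers u, ℓ, one has G(w,u,ℓ;p0,p1+1,p2) = G(w,u,ℓ;p0,p1,p2) + q^{4p1+ℓ+4} G(w,u−1,ℓ;p0,p1,p2), where G at the second argument u−1 is interpreted as 0 when u = 0. -/

import Mathlib

open Finset

noncomputable section

/-- The field `ℚ(q)` of rational functions over `ℚ`. -/
abbrev F : Type := RatFunc ℚ

/-- The indeterminate `q`. -/
noncomputable def qq : F := RatFunc.X

/-- The quantum integer `[n]` with base `v`: `(v^n - v^(-n))/(v - v⁻¹)`. -/
noncomputable def qint (v : F) (n : ℤ) : F := (v ^ n - v ^ (-n)) / (v - v⁻¹)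

/-- The quantum factorial `[m]! = [1][2]⋯[m]` with base `v`. -/
noncomputable def qfact (v : F) (m : ℕ) : F := ∏ k ∈ range m, qint v ((k : ℤ) + 1)

/-- The quantum binomial coefficient `C_v(n,d) = [n][n-1]⋯[n-d+1]/[d]!` for `d ≥ 0`,
and `0` for `d < 0`. -/
noncomputable def qbinom (v : F) (n d : ℤ) : F :=
  if d < 0 then 0
  else (∏ k ∈ range d.toNat, qint v (n - (k : ℤ))) / qfact v d.toNat

/-- The function `G(w,u,ℓ;p0,p1,p2)` of [CLW, (5.1)]. -/
noncomputable def G (w : ℤ) (u ℓ : ℕ) (p0 p1 p2 : ℤ) : F :=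
  (-1 : F) ^ w * qq ^ ((u : ℤ) ^ 2 - w * (u : ℤ) + (ℓ : ℤ) * (u : ℤ)) *
  ((∑ c ∈ range (u + 1), ∑ e ∈ range (u + 1 - c), ∑ t ∈ range (ℓ + 1),
      (let r : ℕ := u - c - e;
       if Even ((t : ℤ) + w - (r : ℤ)) then
         qq ^ (-(t : ℤ) * ((ℓ : ℤ) + (u : ℤ) - 1) - (u : ℤ) * ((c : ℤ) + (e : ℤ)) + 2 * (c : ℤ)
               + (r : ℤ) * p0 + 2 * (c : ℤ) * p1 + 2 * (e : ℤ) * p2)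
           * qbinom qq (ℓ : ℤ) (t : ℤ) * qbinom qq (w + (t : ℤ) + p0) (r : ℤ)
           * qbinom (qq ^ 2) ((w + (t : ℤ) - (r : ℤ)) / 2 + p1) (c : ℤ)
           * qbinom (qq ^ 2) ((w + (t : ℤ) - (r : ℤ)) / 2 + p2) (e : ℤ)
       else 0))
  - (∑ c ∈ range (u + 1), ∑ e ∈ range (u + 1 - c), ∑ t ∈ range (ℓ + 1),
      (let r : ℕ := u - c - e;
       if ¬ Even ((t : ℤ) + w - (r : ℤ)) then
         qq ^ (-(t : ℤ) * ((ℓ : ℤ) + (u : ℤ) - 1) - ((u : ℤ) - 1) * ((c : ℤ) + (e : ℤ))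
               + (r : ℤ) * p0 + 2 * (c : ℤ) * p1 + 2 * (e : ℤ) * p2)
           * qbinom qq (ℓ : ℤ) (t : ℤ) * qbinom qq (w + (t : ℤ) + p0) (r : ℤ)
           * qbinom (qq ^ 2) (1 + (w + (t : ℤ) - (r : ℤ) - 1) / 2 + p1) (c : ℤ)
           * qbinom (qq ^ 2) ((w + (t : ℤ) - (r : ℤ) - 1) / 2 + p2) (e : ℤ)
       else 0)))

/-!
Only the factor `C_{q²}(N + ε + p1, c)` of a summand, where `w + t - r = 2 N + ε` and `ε ∈ {0, 1}` is
the parity of the sum it belongs to, changes non-trivially when `p1` increases. The `q`-Pascal rule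
in its upper argument splits the summand at `(c, e, r, t)` into the one for `p1` and a multiple of
the one at `(c - 1, e, r, t)`, which belongs to `u - 1`. The multiplier is
`q ^ (4 p1 + 3 - 2 (u - 1) + w)`: it depends on neither the summation indices nor the parity, so it
comes out of both sums, and the ratio of the prefactors of `G` for `u` and `u - 1` turns it into
`q ^ (4 p1 + ℓ + 4)`.
-/

section QBinomial

lemma not_isOfFinOrder_of_transcendental {R A : Type*} [CommRing R] [Nontrivial R] [Ring A]
    [Algebra R A] {x : A} (hx : Transcendental R x) : ¬ IsOfFinOrder x := by
  rw [isOfFinOrder_iff_pow_eq_one]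
  rintro ⟨n, hn, hxn⟩
  exact hx (IsAlgebraic.of_pow hn (hxn ▸ isAlgebraic_one))

lemma not_isOfFinOrder_ratFunc_X (K : Type*) [Field K] : ¬ IsOfFinOrder (RatFunc.X : RatFunc K) :=
  not_isOfFinOrder_of_transcendental (RatFunc.transcendental_X (K := K))

variable {v : F}

lemma qint_ne_zero (hv₀ : v ≠ 0) (hv : ¬ IsOfFinOrder v) {n : ℤ} (hn : n ≠ 0) :
    qint v n ≠ 0 := by
  have zpow_sub_zpow_neg_ne_zero {m : ℤ} (hm : m ≠ 0) : v ^ m - v ^ (-m) ≠ 0 := by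
    refine fun h ↦ hv (isOfFinOrder_iff_zpow_eq_one.mpr ⟨m + m, by omega, ?_⟩)
    rw [zpow_add₀ hv₀]
    nth_rw 2 [sub_eq_zero.mp h]
    rw [← zpow_add₀ hv₀, add_neg_cancel, zpow_zero]
  exact div_ne_zero (zpow_sub_zpow_neg_ne_zero hn)
    (by simpa using zpow_sub_zpow_neg_ne_zero one_ne_zero)

lemma qfact_ne_zero (hv₀ : v ≠ 0) (hv : ¬ IsOfFinOrder v) (m : ℕ) : qfact v m ≠ 0 :=
  prod_ne_zero_iff.mpr fun k _ ↦ qint_ne_zero hv₀ hv (by omega)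

lemma qfact_succ (v : F) (m : ℕ) : qfact v (m + 1) = qfact v m * qint v (m + 1) :=
  prod_range_succ _ _

lemma zpow_mul_qint (hv₀ : v ≠ 0) (n d : ℤ) :
    v ^ d * qint v n = qint v (n - d) + v ^ n * qint v d := by
  have hpos : v ^ d * v ^ (-n) = v ^ (-(n - d)) := by rw [← zpow_add₀ hv₀]; ring_nf
  have hneg : v ^ n * v ^ (-d) = v ^ (n - d) := by rw [← zpow_add₀ hv₀]; ring_nf
  simp only [qint]
  linear_combination (hneg - hpos) / (v - v⁻¹)

lemma qbinom_natCast (v : F) (n : ℤ) (d : ℕ) :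
    qbinom v n d = (∏ k ∈ range d, qint v (n - k)) / qfact v d := by
  simp [qbinom]

lemma qbinom_zero_right (v : F) (n : ℤ) : qbinom v n 0 = 1 := by
  simp [qbinom, qfact]

lemma zpow_mul_qbinom_succ_succ (hv₀ : v ≠ 0) (hv : ¬ IsOfFinOrder v) (n : ℤ) (d : ℕ) :
    v ^ ((d : ℤ) + 1) * qbinom v (n + 1) ((d + 1 : ℕ) : ℤ)
      = qbinom v n ((d + 1 : ℕ) : ℤ) + v ^ (n + 1) * qbinom v n d := by
  have hshift : ∏ k ∈ range (d + 1), qint v (n + 1 - k)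
      = (∏ k ∈ range d, qint v (n - k)) * qint v (n + 1) := by
    rw [prod_range_succ']
    simp only [Nat.cast_succ, add_sub_add_right_eq_sub, Nat.cast_zero, sub_zero]
  have hqint : v ^ ((d : ℤ) + 1) * qint v (n + 1)
      = qint v (n - d) + v ^ (n + 1) * qint v (d + 1) := by
    simpa using zpow_mul_qint hv₀ (n + 1) (d + 1)
  have hfact : qfact v d ≠ 0 := qfact_ne_zero hv₀ hv d
  have hd : qint v ((d : ℤ) + 1) ≠ 0 := qint_ne_zero hv₀ hv (by omega)
  simp only [qbinom_natCast]
  rw [hshift, prod_range_succ, qfact_succ]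
  field_simp
  linear_combination (∏ k ∈ range d, qint v (n - k)) * hqint

end QBinomial

lemma qq_ne_zero : qq ≠ 0 := RatFunc.X_ne_zero

lemma qq_zpow_mul_qbinom_succ_succ (n : ℤ) (d : ℕ) :
    qq ^ (2 * ((d : ℤ) + 1)) * qbinom (qq ^ 2) (n + 1) ((d + 1 : ℕ) : ℤ)
      = qbinom (qq ^ 2) n ((d + 1 : ℕ) : ℤ) + qq ^ (2 * (n + 1)) * qbinom (qq ^ 2) n d := by
  have hfin : ¬ IsOfFinOrder (qq ^ 2) := by simpa [qq] using not_isOfFinOrder_ratFunc_X ℚ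
  have hpow (z : ℤ) : qq ^ (2 * z) = (qq ^ 2) ^ z := zpow_mul qq 2 z
  rw [hpow, hpow]
  exact zpow_mul_qbinom_succ_succ (pow_ne_zero 2 qq_ne_zero) hfin n d

lemma sum_antidiagonal_succ_eq_add_mul {R : Type*} [NonUnitalNonAssocSemiring R] {n : ℕ}
    {f g h : ℕ → ℕ → R} {k : R} (hzero : f 0 (n + 1) = g 0 (n + 1))
    (hsucc : ∀ i j, i + j = n → f (i + 1) j = g (i + 1) j + k * h i j) :
    ∑ x ∈ antidiagonal (n + 1), f x.1 x.2
      = ∑ x ∈ antidiagonal (n + 1), g x.1 x.2 + k * ∑ x ∈ antidiagonal n, h x.1 x.2 := by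
  rw [Nat.sum_antidiagonal_succ, Nat.sum_antidiagonal_succ, hzero, mul_sum, add_assoc,
    ← sum_add_distrib]
  congr 1
  exact sum_congr rfl fun x hx ↦ hsucc x.1 x.2 (mem_antidiagonal.mp hx)

lemma sum_antidiagonal_antidiagonal_eq_sum_range {M : Type*} [AddCommMonoid M]
    (f : ℕ → ℕ → ℕ → M) (n : ℕ) :
    ∑ x ∈ antidiagonal n, ∑ y ∈ antidiagonal x.2, f x.1 y.1 y.2
      = ∑ i ∈ range (n + 1), ∑ j ∈ range (n + 1 - i), f i j (n - i - j) := by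
  rw [Nat.sum_antidiagonal_eq_sum_range_succ fun i m ↦ ∑ y ∈ antidiagonal m, f i y.1 y.2]
  refine sum_congr rfl fun i hi ↦ ?_
  rw [Nat.sum_antidiagonal_eq_sum_range_succ (f i), Nat.succ_eq_add_one,
    ← Nat.sub_add_comm (mem_range_succ_iff.mp hi)]

section ParitySum

variable (ε w p0 p1 p2 : ℤ) (u ℓ t c e r : ℕ)

/-- The exponent of `q` in the summand of `G` at `(c, e, r, t)`, for the even sum when `ε = 0` and
for the odd sum when `ε = 1`. The second argument of `G` is encoded as `u = c + e + r`. -/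
def summandExponent : ℤ :=
  -t * (ℓ + (c + e + r) - 1) - (c + e + r - ε) * (c + e) + 2 * (1 - ε) * c
    + r * p0 + 2 * c * p1 + 2 * e * p2

/-- The summand of `G` at `(c, e, r, t)`, for the even sum when `ε = 0` and for the odd sum when
`ε = 1`. It is meant for `w + t - r` of the parity of `ε`, where the integer division is exact. -/
def summand : F :=
  qq ^ summandExponent ε p0 p1 p2 ℓ t c e r * qbinom qq ℓ t * qbinom qq (w + t + p0) r
    * qbinom (qq ^ 2) (ε + (w + t - r - ε) / 2 + p1) c
    * qbinom (qq ^ 2) ((w + t - r - ε) / 2 + p2) e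

/-- The part of the sum over `t` in `G` at fixed `(c, e, r)` for which `t + w - r` has the parity of
`ε`. -/
def paritySlice : F :=
  ∑ t ∈ range (ℓ + 1),
    if Even ((t : ℤ) + w - r - ε) then summand ε w p0 p1 p2 ℓ t c e r else 0

/-- The even (`ε = 0`) and the odd (`ε = 1`) sum in the definition of `G`, with `c + e + r = u`
encoded by nested antidiagonals. -/
def paritySum : F :=
  ∑ x ∈ antidiagonal u, ∑ y ∈ antidiagonal x.2, paritySlice ε w p0 p1 p2 ℓ x.1 y.1 y.2

lemma summandExponent_add_one_p1 :
    summandExponent ε p0 (p1 + 1) p2 ℓ t c e r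
      = summandExponent ε p0 p1 p2 ℓ t c e r + 2 * c := by
  simp only [summandExponent]
  ring

lemma summandExponent_succ {N : ℤ} (hN : w + t - r = 2 * N + ε) :
    summandExponent ε p0 p1 p2 ℓ t (c + 1) e r + 2 * (ε + N + p1 + 1)
      = 4 * p1 + 3 - 2 * ((c + e + r : ℕ) : ℤ) + w + summandExponent ε p0 p1 p2 ℓ t c e r := by
  simp only [summandExponent]
  push_cast
  linear_combination -hN

lemma summand_zero_add_one_p1 :
    summand ε w p0 (p1 + 1) p2 ℓ t 0 e r = summand ε w p0 p1 p2 ℓ t 0 e r := by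
  simp only [summand, summandExponent_add_one_p1, Nat.cast_zero, mul_zero, add_zero,
    qbinom_zero_right]

lemma summand_succ_add_one_p1 (heven : Even ((t : ℤ) + w - r - ε)) :
    summand ε w p0 (p1 + 1) p2 ℓ t (c + 1) e r
      = summand ε w p0 p1 p2 ℓ t (c + 1) e r
        + qq ^ (4 * p1 + 3 - 2 * ((c + e + r : ℕ) : ℤ) + w) * summand ε w p0 p1 p2 ℓ t c e r := by
  set N := (w + t - r - ε) / 2 with hN
  have hparity : w + t - r = 2 * N + ε := by
    obtain ⟨k, hk⟩ := heven
    omega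
  have hexp : qq ^ summandExponent ε p0 p1 p2 ℓ t (c + 1) e r * qq ^ (2 * (ε + N + p1 + 1))
      = qq ^ (4 * p1 + 3 - 2 * ((c + e + r : ℕ) : ℤ) + w)
        * qq ^ summandExponent ε p0 p1 p2 ℓ t c e r := by
    rw [← zpow_add₀ qq_ne_zero, ← zpow_add₀ qq_ne_zero,
      summandExponent_succ ε w p0 p1 p2 ℓ t c e r hparity]
  have hpascal := qq_zpow_mul_qbinom_succ_succ (ε + N + p1) c
  simp only [summand, ← hN, summandExponent_add_one_p1, ← add_assoc,
    zpow_add₀ qq_ne_zero (summandExponent _ _ _ _ _ _ _ _ _), Nat.cast_succ] at hpascal ⊢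
  linear_combination
    qq ^ summandExponent ε p0 p1 p2 ℓ t (c + 1) e r * qbinom qq ℓ t * qbinom qq (w + t + p0) r
        * qbinom (qq ^ 2) (N + p2) e * hpascal
      + qbinom qq ℓ t * qbinom qq (w + t + p0) r * qbinom (qq ^ 2) (N + p2) e
        * qbinom (qq ^ 2) (ε + N + p1) c * hexp

lemma paritySlice_zero_add_one_p1 :
    paritySlice ε w p0 (p1 + 1) p2 ℓ 0 e r = paritySlice ε w p0 p1 p2 ℓ 0 e r := by
  simp only [paritySlice, summand_zero_add_one_p1]

lemma paritySlice_succ_add_one_p1 :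
    paritySlice ε w p0 (p1 + 1) p2 ℓ (c + 1) e r
      = paritySlice ε w p0 p1 p2 ℓ (c + 1) e r
        + qq ^ (4 * p1 + 3 - 2 * ((c + e + r : ℕ) : ℤ) + w)
          * paritySlice ε w p0 p1 p2 ℓ c e r := by
  rw [paritySlice, paritySlice, paritySlice, mul_sum, ← sum_add_distrib]
  refine sum_congr rfl fun t _ ↦ ?_
  split_ifs with heven
  · exact summand_succ_add_one_p1 ε w p0 p1 p2 ℓ t c e r heven
  · rw [mul_zero, add_zero]

lemma paritySum_zero_add_one_p1 :
    paritySum ε w p0 (p1 + 1) p2 0 ℓ = paritySum ε w p0 p1 p2 0 ℓ := by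
  simp only [paritySum, Nat.antidiagonal_zero, sum_singleton, paritySlice_zero_add_one_p1]

lemma paritySum_succ_add_one_p1 :
    paritySum ε w p0 (p1 + 1) p2 (u + 1) ℓ
      = paritySum ε w p0 p1 p2 (u + 1) ℓ
        + qq ^ (4 * p1 + 3 - 2 * (u : ℤ) + w) * paritySum ε w p0 p1 p2 u ℓ := by
  let inner (p1 : ℤ) (c m : ℕ) : F :=
    ∑ y ∈ antidiagonal m, paritySlice ε w p0 p1 p2 ℓ c y.1 y.2
  refine sum_antidiagonal_succ_eq_add_mul (f := inner (p1 + 1)) (g := inner p1) (h := inner p1)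
    ?_ fun c m hcm ↦ ?_
  · simp only [inner, paritySlice_zero_add_one_p1]
  · simp only [inner]
    rw [mul_sum, ← sum_add_distrib]
    refine sum_congr rfl fun y hy ↦ ?_
    rw [paritySlice_succ_add_one_p1, add_assoc c, mem_antidiagonal.mp hy, hcm]

lemma G_eq_paritySum_sub_paritySum :
    G w u ℓ p0 p1 p2
      = (-1) ^ w * qq ^ ((u : ℤ) ^ 2 - w * u + ℓ * u)
        * (paritySum 0 w p0 p1 p2 u ℓ - paritySum 1 w p0 p1 p2 u ℓ) := by
  simp only [G, paritySum, sum_antidiagonal_antidiagonal_eq_sum_range]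
  congr 2 <;>
  · refine sum_congr rfl fun c hc ↦ sum_congr rfl fun e he ↦ sum_congr rfl fun t _ ↦ ?_
    have hu : (u : ℤ) = c + e + (u - c - e : ℕ) := by
      rw [mem_range] at hc he
      omega
    simp only [summand, summandExponent, ← hu, sub_zero, sub_self, Int.even_sub_one, zero_add,
      mul_one, mul_zero, zero_mul, add_zero]

end ParitySum

/-- Recursion in `p1`:
`G(w,u,ℓ;p0,p1+1,p2) = G(w,u,ℓ;p0,p1,p2) + q^{4p1+ℓ+4} G(w,u−1,ℓ;p0,p1,p2)`,
where the term with second argument `u−1` is interpreted as `0` when `u = 0`. -/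
theorem G_rec_p1 (w p0 p1 p2 : ℤ) (u ℓ : ℕ) :
    G w u ℓ p0 (p1 + 1) p2
      = G w u ℓ p0 p1 p2
        + qq ^ (4 * p1 + (ℓ : ℤ) + 4) * (if u = 0 then 0 else G w (u - 1) ℓ p0 p1 p2) := by
  have hG := G_eq_paritySum_sub_paritySum w p0
  rcases u with _ | u
  · simp only [hG, paritySum_zero_add_one_p1, if_true, mul_zero, add_zero]
  · have hprefactor : qq ^ (4 * p1 + (ℓ : ℤ) + 4) * qq ^ ((u : ℤ) ^ 2 - w * u + ℓ * u)
        = qq ^ (((u + 1 : ℕ) : ℤ) ^ 2 - w * (u + 1 : ℕ) + ℓ * (u + 1 : ℕ))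
          * qq ^ (4 * p1 + 3 - 2 * (u : ℤ) + w) := by
      rw [← zpow_add₀ qq_ne_zero, ← zpow_add₀ qq_ne_zero]
      congr 1
      push_cast
      ring
    rw [if_neg u.succ_ne_zero, Nat.add_sub_cancel, hG, hG, hG, paritySum_succ_add_one_p1,
      paritySum_succ_add_one_p1]
    linear_combination
      -(-1 : F) ^ w * (paritySum 0 w p0 p1 p2 u ℓ - paritySum 1 w p0 p1 p2 u ℓ) * hprefactor

end
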